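/- arXiv:2308.06364 — 4 statements merged into one kernel-verified Lean document; each statement's English description precedes it below -/
import Mathlib

section
/- Let N be a positive integer with base-φ representation given by the finite set S of integers (so S contains no two consecutive integers and N = Σ_{i∈S} φ^i). Assume S contains at least one positive element, and let i be the smallest positive element of S. If i is even, then N = Σ_{k∈S, k>0} L_k + d_0. -/
/-!
Split `N = A + d₀ + B`, where `A` and `B` collect the powers `φ ^ k` with `k > 0` and `k < 0`, and
let `A'` be the sum of the conjugates `ψ ^ k` over the positive `k ∈ S`. Since `A + A'` is a sum of
Lucas numbers, `B - A'` is an integer, and the claim is that it vanishes. Powers of `φ` with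
pairwise non-consecutive exponents `≤ m` sum to less than `φ ^ (m + 1)`, so `0 ≤ B < 1`. As
`|ψ ^ k| = φ ^ (-k)`, the same bound shows that the leading term `ψ ^ i` of `A'` dominates the
rest; it is positive because `i` is even, and `0 < A' < φ ^ (1 - i) ≤ 1` follows.
-/

/-- The golden ratio φ = (1+√5)/2. -/
noncomputable def goldenPhi : ℝ := (1 + Real.sqrt 5) / 2

/-- The algebraic conjugate φ̄ = (1−√5)/2. -/
noncomputable def goldenPhiBar : ℝ := (1 - Real.sqrt 5) / 2

/-- Lucas numbers extended to all integer indices: L n = φ^n + φ̄^n. -/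
noncomputable def LucasR (n : ℤ) : ℝ := goldenPhi ^ n + goldenPhiBar ^ n

open Real goldenRatio Pointwise

/-- The admissible exponent sets of base-`φ` representations: no two elements differ by one. -/
def NoConsecutive (S : Finset ℤ) : Prop := ∀ k ∈ S, k + 1 ∉ S

namespace NoConsecutive

variable {S T : Finset ℤ} {a b : ℤ}

lemma mono (hS : NoConsecutive S) (hTS : T ⊆ S) : NoConsecutive T :=
  fun k hk hk' ↦ hS k (hTS hk) (hTS hk')

lemma neg (hS : NoConsecutive S) : NoConsecutive (-S) := by
  intro k hk hk'
  rw [Finset.mem_neg'] at hk hk'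
  exact hS _ hk' (by rwa [neg_add, neg_add_cancel_right])

lemma add_two_le (hS : NoConsecutive S) (ha : a ∈ S) (hb : b ∈ S) (hab : a < b) : a + 2 ≤ b := by
  have hne : a + 1 ≠ b := fun h ↦ hS a ha (h ▸ hb)
  lia

end NoConsecutive

section Sums

variable {K : Type*} [Field K] [LinearOrder K] [IsStrictOrderedRing K] {x : K}

lemma zpow_add_zpow_sub_one_le (hx : 0 < x) (hx2 : x + 1 ≤ x ^ 2) (m : ℤ) :
    x ^ m + x ^ (m - 1) ≤ x ^ (m + 1) :=
  calc x ^ m + x ^ (m - 1)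
    _ = x ^ (m - 1) * (x + 1) := by rw [mul_add_one, ← zpow_add_one₀ hx.ne', sub_add_cancel]
    _ ≤ x ^ (m - 1) * x ^ 2 := by gcongr
    _ = x ^ (m + 1) := by rw [← zpow_natCast, ← zpow_add₀ hx.ne']; congr 1; lia

lemma NoConsecutive.sum_zpow_lt {S : Finset ℤ} {m : ℤ} (hS : NoConsecutive S)
    (hx : 0 < x) (hx2 : x + 1 ≤ x ^ 2) (hm : ∀ k ∈ S, k ≤ m) :
    ∑ k ∈ S, x ^ k < x ^ (m + 1) := by
  induction S using Finset.induction_on_max generalizing m with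
  | empty => simpa using zpow_pos hx (m + 1)
  | insert a s hlt ih =>
    have hle : ∀ k ∈ s, k ≤ a - 2 := fun k hk ↦ le_sub_iff_add_le.2 <|
      hS.add_two_le (Finset.mem_insert_of_mem hk) (Finset.mem_insert_self a s) (hlt k hk)
    have hrest : ∑ k ∈ s, x ^ k < x ^ (a - 1) := by
      convert ih (hS.mono (Finset.subset_insert a s)) hle using 2
      ring
    have hx1 : 1 ≤ x := by nlinarith
    calc ∑ k ∈ insert a s, x ^ k
      _ = x ^ a + ∑ k ∈ s, x ^ k := Finset.sum_insert fun ha ↦ (hlt a ha).false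
      _ < x ^ a + x ^ (a - 1) := by gcongr
      _ ≤ x ^ (a + 1) := zpow_add_zpow_sub_one_le hx hx2 a
      _ ≤ x ^ (m + 1) := by gcongr; exact hm a (Finset.mem_insert_self a s)

end Sums

lemma sum_eq_sum_pos_add_ite_add_sum_neg {α M : Type*} [LinearOrder α] [Zero α] [AddCommMonoid M]
    (S : Finset α) (f : α → M) :
    ∑ k ∈ S, f k =
      ∑ k ∈ S with 0 < k, f k + (if 0 ∈ S then f 0 else 0) + ∑ k ∈ S with k < 0, f k := by
  have hterm : ∀ k, f k =
      (if 0 < k then f k else 0) + (if 0 = k then f k else 0) + (if k < 0 then f k else 0) := by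
    intro k
    rcases lt_trichotomy k 0 with h | rfl | h
    · simp [h, h.not_gt, h.ne']
    · simp
    · simp [h, h.not_gt, h.ne]
  simp only [Finset.sum_filter, ← Finset.sum_ite_eq S 0 f, ← Finset.sum_add_distrib, ← hterm]

section GoldenRatio

variable {S : Finset ℤ} {i m : ℤ}

lemma abs_goldenConj_zpow (k : ℤ) : |ψ ^ k| = φ ^ (-k) := by
  rw [abs_zpow, abs_of_neg goldenConj_neg, ← inv_goldenRatio, inv_zpow']

lemma NoConsecutive.sum_goldenRatio_zpow_lt (hS : NoConsecutive S) (hm : ∀ k ∈ S, k ≤ m) :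
    ∑ k ∈ S, φ ^ k < φ ^ (m + 1) :=
  hS.sum_zpow_lt goldenRatio_pos goldenRatio_sq.ge hm

lemma NoConsecutive.sum_neg_goldenRatio_zpow_mem_Ico (hS : NoConsecutive S) :
    ∑ k ∈ S with k < 0, φ ^ k ∈ Set.Ico 0 1 := by
  have hle : ∀ k ∈ S.filter (· < 0), k ≤ -1 := fun k hk ↦
    Int.le_sub_one_of_lt (Finset.mem_filter.1 hk).2
  have hlt := (hS.mono (Finset.filter_subset (· < 0) S)).sum_goldenRatio_zpow_lt hle
  exact ⟨by positivity, by simpa using hlt⟩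

lemma NoConsecutive.abs_sum_goldenConj_zpow_lt (hS : NoConsecutive S) (hm : ∀ k ∈ S, m ≤ k) :
    |∑ k ∈ S, ψ ^ k| < φ ^ (1 - m) :=
  calc |∑ k ∈ S, ψ ^ k|
    _ ≤ ∑ k ∈ S, |ψ ^ k| := Finset.abs_sum_le_sum_abs _ _
    _ = ∑ k ∈ -S, φ ^ k := by simp only [abs_goldenConj_zpow, Finset.sum_neg_index]
    _ < φ ^ (-m + 1) :=
      hS.neg.sum_goldenRatio_zpow_lt fun k hk ↦ le_neg_of_le_neg (hm _ (Finset.mem_neg'.1 hk))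
    _ = φ ^ (1 - m) := by rw [neg_add_eq_sub]

lemma NoConsecutive.sum_goldenConj_zpow_mem_Ioo (hS : NoConsecutive S)
    (hi : IsLeast (S : Set ℤ) i) (heven : Even i) :
    ∑ k ∈ S, ψ ^ k ∈ Set.Ioo 0 (φ ^ (1 - i)) := by
  have hle : ∀ k ∈ S.erase i, i + 2 ≤ k := fun k hk ↦
    have hkS := Finset.mem_of_mem_erase hk
    hS.add_two_le hi.1 hkS ((hi.2 hkS).lt_of_ne (Finset.ne_of_mem_erase hk).symm)
  have hrest := (hS.mono (Finset.erase_subset i S)).abs_sum_goldenConj_zpow_lt hle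
  have hlead : ψ ^ i = φ ^ (-i) := by
    rw [← abs_goldenConj_zpow, abs_of_nonneg (heven.zpow_nonneg ψ)]
  have hdecr : φ ^ (-i - 1) < φ ^ (-i) := zpow_lt_zpow_right₀ one_lt_goldenRatio (by lia)
  have hrec : φ ^ (-i) + φ ^ (-i - 1) ≤ φ ^ (-i + 1) :=
    zpow_add_zpow_sub_one_le goldenRatio_pos goldenRatio_sq.ge (-i)
  rw [show 1 - (i + 2) = -i - 1 by ring, abs_lt] at hrest
  rw [← Finset.add_sum_erase S (ψ ^ ·) hi.1, hlead, ← neg_add_eq_sub]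
  constructor <;> linarith

-- `goldenPhi` and `goldenPhiBar` unfold to the `φ` and `ψ` of Mathlib.
lemma lucasR_eq (k : ℤ) : LucasR k = φ ^ k + ψ ^ k := rfl

lemma lucasR_eq_intFib_add_intFib (k : ℤ) : LucasR k = Int.fib (k - 1) + Int.fib (k + 1) := by
  have hφ : φ ^ (k - 1) + φ ^ (k + 1) = √5 * φ ^ k := by
    rw [zpow_sub_one₀ goldenRatio_ne_zero, zpow_add_one₀ goldenRatio_ne_zero, inv_goldenRatio]
    ring
  have hψ : ψ ^ (k - 1) + ψ ^ (k + 1) = -√5 * ψ ^ k := by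
    rw [zpow_sub_one₀ goldenConj_ne_zero, zpow_add_one₀ goldenConj_ne_zero, inv_goldenConj]
    ring
  have hsqrt : √5 ≠ 0 := by positivity
  rw [coe_intFib_eq, coe_intFib_eq, ← add_div, eq_div_iff hsqrt, lucasR_eq]
  linear_combination hψ - hφ

lemma sum_lucasR (S : Finset ℤ) :
    ∑ k ∈ S, LucasR k = ∑ k ∈ S, φ ^ k + ∑ k ∈ S, ψ ^ k := by
  simp only [lucasR_eq, Finset.sum_add_distrib]

lemma exists_int_eq_sum_lucasR (S : Finset ℤ) : ∃ z : ℤ, (z : ℝ) = ∑ k ∈ S, LucasR k :=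
  ⟨∑ k ∈ S, (Int.fib (k - 1) + Int.fib (k + 1)), by
    simp only [lucasR_eq_intFib_add_intFib, Int.cast_sum, Int.cast_add]⟩

end GoldenRatio

/-- Theorem 1 (even case): if the smallest positive index `i` in the base-φ
representation `S` of `N` is even, then `N = Σ_{k∈S, k>0} L_k + d_0`. -/
theorem stmt_1 (N : ℕ) (hN : 0 < N) (S : Finset ℤ)
    (hnc : ∀ k ∈ S, k + 1 ∉ S)
    (hrep : (N : ℝ) = ∑ k ∈ S, goldenPhi ^ k)
    (i : ℤ) (hiS : i ∈ S) (hipos : 0 < i)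
    (hmin : ∀ j ∈ S, 0 < j → i ≤ j)
    (heven : Even i) :
    (N : ℝ) = (∑ k ∈ S.filter (fun k => 0 < k), LucasR k) +
      (if (0 : ℤ) ∈ S then 1 else 0) := by
  set P := S.filter (fun k => 0 < k)
  set B := ∑ k ∈ S with k < 0, φ ^ k
  have hS : NoConsecutive S := hnc
  have hsplit : (N : ℝ) = ∑ k ∈ P, φ ^ k + (if (0 : ℤ) ∈ S then 1 else 0) + B :=
    hrep.trans (sum_eq_sum_pos_add_ite_add_sum_neg S (φ ^ ·))
  have hB : B ∈ Set.Ico 0 1 := hS.sum_neg_goldenRatio_zpow_mem_Ico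
  have hi : IsLeast (P : Set ℤ) i :=
    ⟨Finset.mem_filter.2 ⟨hiS, hipos⟩, fun k hk ↦ (Finset.mem_filter.1 hk).elim (hmin k)⟩
  have hA' : ∑ k ∈ P, ψ ^ k ∈ Set.Ioo 0 (φ ^ (1 - i)) :=
    (hS.mono (Finset.filter_subset _ S)).sum_goldenConj_zpow_mem_Ioo hi heven
  have hpow : φ ^ (1 - i) ≤ 1 := zpow_le_one_of_nonpos₀ one_lt_goldenRatio.le (by lia)
  obtain ⟨z, hz⟩ : ∃ z : ℤ, z = B - ∑ k ∈ P, ψ ^ k := by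
    obtain ⟨M, hM⟩ := exists_int_eq_sum_lucasR P
    refine ⟨N - (if (0 : ℤ) ∈ S then 1 else 0) - M, ?_⟩
    push_cast
    linarith [sum_lucasR P]
  have hz_zero : z = 0 := by
    rw [← Int.abs_lt_one_iff, ← Int.cast_lt (R := ℝ), Int.cast_abs, Int.cast_one, hz, abs_lt]
    constructor <;> linarith [hB.1, hB.2, hA'.1, hA'.2]
  rw [hz_zero, Int.cast_zero] at hz
  linarith [sum_lucasR P]
end

section
/- Let N be a positive integer and let i_1, i_2, …, i_m be integers. If N = φ^{i_1} + φ^{i_2} + ⋯ + φ^{i_m}, then for every integer n, N·F_n = F_{n+i_1} + F_{n+i_2} + ⋯ + F_{n+i_m}. -/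
/-- Fibonacci numbers extended to all integer indices: F n = (φ^n − φ̄^n)/√5. -/
noncomputable def FibR (n : ℤ) : ℝ := (goldenPhi ^ n - goldenPhiBar ^ n) / Real.sqrt 5

/-!
Any two-sided sequence with `G (n + 2) = G n + G (n + 1)` satisfies
`G (n + k) = F_k G (n + 1) + F_{k-1} G n`. For `G n = φ ^ n` this gives `φ ^ k = F_k φ + F_{k-1}`,
so by irrationality of `φ` a relation `∑ c_j φ ^ i_j = N` with integer coefficients forces
`∑ c_j F_{i_j} = 0` and `∑ c_j F_{i_j - 1} = N`. Inserting these two sums into the addition formula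
for an arbitrary `G` yields `∑ c_j G (n + i_j) = N G n`.
-/

section FibonacciRecurrence

variable {A : Type*} [AddCommGroup A] {G : ℤ → A}

lemma apply_add_one_eq_apply_sub_one_add (hG : ∀ n, G (n + 2) = G n + G (n + 1)) (n : ℤ) :
    G (n + 1) = G (n - 1) + G n := by
  simpa [sub_add_eq_add_sub, add_sub_assoc] using hG (n - 1)

lemma apply_add_eq_fib_smul_add_fib_smul (hG : ∀ n, G (n + 2) = G n + G (n + 1)) (n k : ℤ) :
    G (n + k) = Int.fib k • G (n + 1) + Int.fib (k - 1) • G n := by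
  have fib_step := apply_add_one_eq_apply_sub_one_add Int.fib_add_two
  induction k using Int.induction_on generalizing n with
  | zero => simp
  | succ k ih =>
    rw [show n + (k + 1) = n + 1 + k by ring, ih, add_sub_cancel_right, fib_step k,
      show n + 1 + 1 = n + 2 by ring, hG]
    module
  | pred k ih =>
    have fib_neg_eq : Int.fib (-k) = Int.fib (-k - 1 - 1) + Int.fib (-k - 1) := by
      simpa only [sub_add_cancel] using fib_step (-k - 1)
    rw [show n + (-k - 1) = n - 1 + -k by ring, ih, sub_add_cancel, fib_neg_eq,
      apply_add_one_eq_apply_sub_one_add hG]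
    module

end FibonacciRecurrence

section RootOfFibonacciPolynomial

variable {K : Type*} [DivisionRing K] {x : K}

lemma zpow_add_two_of_sq_eq_add_one (hx : x ^ 2 = x + 1) (n : ℤ) :
    x ^ (n + 2) = x ^ n + x ^ (n + 1) := by
  have x_ne_zero : x ≠ 0 := by
    rintro rfl
    simp at hx
  rw [zpow_add₀ x_ne_zero, zpow_add_one₀ x_ne_zero, zpow_ofNat, hx, mul_add, mul_one,
    add_comm]

lemma zpow_eq_fib_mul_add_fib_of_sq_eq_add_one (hx : x ^ 2 = x + 1) (k : ℤ) :
    x ^ k = Int.fib k * x + Int.fib (k - 1) := by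
  simpa using apply_add_eq_fib_smul_add_fib_smul (zpow_add_two_of_sq_eq_add_one hx) 0 k

end RootOfFibonacciPolynomial

lemma intCast_mul_add_intCast_eq_intCast_iff_of_irrational {x : ℝ} (hx : Irrational x)
    {a b c : ℤ} : a * x + b = c ↔ a = 0 ∧ b = c := by
  refine ⟨fun h ↦ ?_, fun ⟨ha, hb⟩ ↦ by simp [ha, hb]⟩
  have ha : a = 0 := by
    by_contra ha
    exact ((hx.intCast_mul ha).add_intCast b).ne_int c h
  refine ⟨ha, ?_⟩
  simpa [ha] using h

open Real

theorem stmt_4_general {A ι : Type*} [AddCommGroup A] {G : ℤ → A}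
    (hG : ∀ n, G (n + 2) = G n + G (n + 1)) (s : Finset ι) (c i : ι → ℤ) (N : ℤ)
    (h : (N : ℝ) = ∑ j ∈ s, c j * goldenRatio ^ i j) (n : ℤ) :
    N • G n = ∑ j ∈ s, c j • G (n + i j) := by
  have golden_coords : ((∑ j ∈ s, c j * Int.fib (i j) : ℤ) : ℝ) * goldenRatio +
      (∑ j ∈ s, c j * Int.fib (i j - 1) : ℤ) = N := by
    rw [h]
    push_cast
    rw [Finset.sum_mul, ← Finset.sum_add_distrib]
    refine Finset.sum_congr rfl fun j _ ↦ ?_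
    rw [zpow_eq_fib_mul_add_fib_of_sq_eq_add_one goldenRatio_sq]
    ring
  obtain ⟨sum_fib, sum_fib_pred⟩ :=
    (intCast_mul_add_intCast_eq_intCast_iff_of_irrational goldenRatio_irrational).mp golden_coords
  symm
  calc ∑ j ∈ s, c j • G (n + i j)
      = (∑ j ∈ s, c j * Int.fib (i j)) • G (n + 1) +
          (∑ j ∈ s, c j * Int.fib (i j - 1)) • G n := by
        rw [Finset.sum_smul, Finset.sum_smul, ← Finset.sum_add_distrib]
        refine Finset.sum_congr rfl fun j _ ↦ ?_
        rw [apply_add_eq_fib_smul_add_fib_smul hG, smul_add, smul_smul, smul_smul]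
    _ = N • G n := by rw [sum_fib, sum_fib_pred, zero_smul, zero_add]

lemma goldenPhi_eq_goldenRatio : goldenPhi = goldenRatio := rfl

lemma FibR_eq_intFib (n : ℤ) : FibR n = Int.fib n := (coe_intFib_eq n).symm

lemma FibR_add_two (n : ℤ) : FibR (n + 2) = FibR n + FibR (n + 1) := by
  simp only [FibR_eq_intFib, Int.fib_add_two, Int.cast_add]

/-- If `N = φ^{i_1} + ⋯ + φ^{i_m}`, then `N·F_n = F_{n+i_1} + ⋯ + F_{n+i_m}`
for every integer `n`. -/
theorem stmt_4 (N : ℕ) (hN : 0 < N) (m : ℕ) (i : Fin m → ℤ)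
    (h : (N : ℝ) = ∑ k, goldenPhi ^ (i k)) :
    ∀ n : ℤ, (N : ℝ) * FibR n = ∑ k, FibR (n + i k) := by
  simpa using stmt_4_general FibR_add_two Finset.univ 1 i N
    (by simpa [goldenPhi_eq_goldenRatio] using h)
end

section
/- Let N be a positive integer with base-φ representation given by the finite set S of integers (so S contains no two consecutive integers and N = Σ_{i∈S} φ^i). Then 2N = Σ_{k∈S, k>0} L_k + 2·d_0 + Σ_{k∈S, k<0} (−1)^{|k|} L_{|k|}; equivalently, 2N = Σ_{k∈S} L_k, where the Lucas numbers are extended to negative indices by L_{−n} = (−1)^n L_n and L_0 = 2. -/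
/-!
`φ` and `ψ` (the `φ̄` of the statement) are conjugate over `ℚ`, both having minimal polynomial
`X² - X - 1`, so the isomorphism `ℚ(φ) ≃ ℚ(ψ)` turns a representation of a rational number by powers
of `φ` into the same representation by powers of `ψ`. Adding the two gives `2N = Σ L_k`, and the
terms of negative index are rewritten by `L_{-n} = (-1)^n L_n`.
-/

open Polynomial Real
open scoped IntermediateField goldenRatio

lemma sum_eq_sum_pos_add_zero_add_sum_neg {ι M : Type*} [LinearOrder ι] [Zero ι] [AddCommMonoid M]
    (s : Finset ι) (f : ι → M) :
    ∑ k ∈ s, f k = ∑ k ∈ s with 0 < k, f k + (if 0 ∈ s then f 0 else 0) +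
      ∑ k ∈ s with k < 0, f k := by
  rw [← Finset.sum_ite_eq' s 0 f, Finset.sum_filter, Finset.sum_filter, ← Finset.sum_add_distrib,
    ← Finset.sum_add_distrib]
  refine Finset.sum_congr rfl fun k _ => ?_
  rcases lt_trichotomy k 0 with hneg | rfl | hpos
  · simp [hneg, hneg.ne, hneg.not_gt]
  · simp
  · simp [hpos, hpos.ne', hpos.not_gt]

section Conjugates

variable {K L : Type*} [Field K] [Field L] [Algebra K L] {x y : L}

lemma minpoly_eq_of_sq_eq_add {b c : K} (hx : x ∉ (algebraMap K L).range)
    (hsq : x ^ 2 = algebraMap K L b * x + algebraMap K L c) :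
    minpoly K x = X ^ 2 - C b * X - C c := by
  have hmonic : (X ^ 2 - C b * X - C c).Monic := by monicity!
  have hroot : aeval x (X ^ 2 - C b * X - C c) = 0 := by
    simp [hsq]
  have hint : IsIntegral K x := ⟨_, hmonic, hroot⟩
  refine (eq_of_monic_of_dvd_of_natDegree_le (minpoly.monic hint) hmonic
    (minpoly.dvd K x hroot) ?_).symm
  calc (X ^ 2 - C b * X - C c).natDegree = 2 := by compute_degree!
    _ ≤ (minpoly K x).natDegree := (minpoly.two_le_natDegree_iff hint).mpr hx

lemma sum_smul_zpow_eq_algebraMap_of_isConjRoot (hx : IsIntegral K x) (hxy : IsConjRoot K x y)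
    {s : Finset ℤ} {c : ℤ → K} {q : K} (hsum : ∑ k ∈ s, c k • x ^ k = algebraMap K L q) :
    ∑ k ∈ s, c k • y ^ k = algebraMap K L q := by
  let gen := IntermediateField.AdjoinSimple.gen K x
  let f : K⟮x⟯ →ₐ[K] L := K⟮x⟯.val
  let g : K⟮x⟯ →ₐ[K] L := K⟮y⟯.val.comp (minpoly.algEquiv hx.isAlgebraic hxy).toAlgHom
  have hf : f gen = x := IntermediateField.AdjoinSimple.coe_gen K x
  have hg : g gen = y := by
    simp [g, gen, minpoly.algEquiv_apply hx.isAlgebraic hxy]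
  have hgen : ∑ k ∈ s, c k • gen ^ k = algebraMap K K⟮x⟯ q :=
    f.injective (by simpa [hf] using hsum)
  simpa [hg] using congrArg g hgen

end Conjugates

lemma minpoly_goldenRatio : minpoly ℚ φ = X ^ 2 - X - 1 := by
  simpa using minpoly_eq_of_sq_eq_add (b := 1) (c := 1) goldenRatio_irrational (by simp)

lemma minpoly_goldenConj : minpoly ℚ ψ = X ^ 2 - X - 1 := by
  simpa using minpoly_eq_of_sq_eq_add (b := 1) (c := 1) goldenConj_irrational (by simp)

lemma isIntegral_goldenRatio : IsIntegral ℚ φ := by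
  rw [← minpoly.ne_zero_iff, minpoly_goldenRatio]
  exact Monic.ne_zero (by monicity!)

lemma isConjRoot_goldenRatio_goldenConj : IsConjRoot ℚ φ ψ :=
  minpoly_goldenRatio.trans minpoly_goldenConj.symm

lemma LucasR_eq_goldenRatio_zpow_add_goldenConj_zpow (n : ℤ) : LucasR n = φ ^ n + ψ ^ n := rfl

lemma LucasR_zero : LucasR 0 = 2 := by
  norm_num [LucasR]

lemma LucasR_neg (n : ℤ) : LucasR (-n) = (-1) ^ n * LucasR n := by
  simp only [LucasR_eq_goldenRatio_zpow_add_goldenConj_zpow]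
  calc φ ^ (-n) + ψ ^ (-n) = (-1 * ψ) ^ n + (-1 * φ) ^ n := by
        rw [← inv_zpow', ← inv_zpow', inv_goldenRatio, inv_goldenConj, neg_one_mul, neg_one_mul]
    _ = (-1) ^ n * (φ ^ n + ψ ^ n) := by
        rw [mul_zpow, mul_zpow]
        ring

lemma LucasR_of_nonpos {k : ℤ} (hk : k ≤ 0) :
    LucasR k = (-1) ^ k.natAbs * LucasR k.natAbs := by
  rw [← zpow_natCast, ← LucasR_neg, Int.ofNat_natAbs_of_nonpos hk, neg_neg]

lemma sum_mul_LucasR_eq_two_mul {q : ℚ} {S : Finset ℤ} {c : ℤ → ℚ}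
    (hrep : (q : ℝ) = ∑ k ∈ S, c k * φ ^ k) :
    ∑ k ∈ S, c k * LucasR k = 2 * (q : ℝ) := by
  have hconj : ∑ k ∈ S, c k * ψ ^ k = (q : ℝ) := by
    simpa [Rat.smul_def] using sum_smul_zpow_eq_algebraMap_of_isConjRoot isIntegral_goldenRatio
      isConjRoot_goldenRatio_goldenConj (c := c) (by simpa [Rat.smul_def] using hrep.symm)
  simp only [LucasR_eq_goldenRatio_zpow_add_goldenConj_zpow, mul_add, Finset.sum_add_distrib]
  rw [← hrep, hconj, two_mul]

theorem stmt_11_general (q : ℚ) (S : Finset ℤ) (c : ℤ → ℚ)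
    (hrep : (q : ℝ) = ∑ k ∈ S, c k * goldenPhi ^ k) :
    2 * (q : ℝ) = (∑ k ∈ S.filter (fun k => 0 < k), c k * LucasR k) +
      2 * (if (0 : ℤ) ∈ S then (c 0 : ℝ) else 0) +
      (∑ k ∈ S.filter (fun k => k < 0),
        c k * ((-1 : ℝ) ^ (k.natAbs) * LucasR (k.natAbs))) := by
  have hneg : ∑ k ∈ S with k < 0, (c k : ℝ) * LucasR k =
      ∑ k ∈ S with k < 0, c k * ((-1 : ℝ) ^ k.natAbs * LucasR k.natAbs) :=
    Finset.sum_congr rfl fun k hk => by rw [← LucasR_of_nonpos (Finset.mem_filter.mp hk).2.le]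
  rw [← sum_mul_LucasR_eq_two_mul hrep, sum_eq_sum_pos_add_zero_add_sum_neg, hneg, LucasR_zero,
    mul_ite, mul_zero, mul_comm 2]

/-- Corollary 1: for `N` with base-φ representation `S`,
`2N = Σ_{k∈S, k>0} L_k + 2·d_0 + Σ_{k∈S, k<0} (−1)^{|k|} L_{|k|}`. -/
theorem stmt_11 (N : ℕ) (hN : 0 < N) (S : Finset ℤ)
    (hnc : ∀ k ∈ S, k + 1 ∉ S)
    (hrep : (N : ℝ) = ∑ k ∈ S, goldenPhi ^ k) :
    2 * (N : ℝ) = (∑ k ∈ S.filter (fun k => 0 < k), LucasR k) +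
      2 * (if (0 : ℤ) ∈ S then 1 else 0) +
      (∑ k ∈ S.filter (fun k => k < 0),
        (-1 : ℝ) ^ (k.natAbs) * LucasR (k.natAbs)) := by
  simpa using stmt_11_general N S 1 (by simpa using hrep)
end

section
/- Let N be a positive integer and let i_1, i_2, …, i_m be integers with N = φ^{i_1} + φ^{i_2} + ⋯ + φ^{i_m}. Then the three conditions are equivalent: (1) for every integer n, N·F_n = F_{n+i_1} + ⋯ + F_{n+i_m}; (2) N = φ^{i_1} + ⋯ + φ^{i_m}; (3) for every integer n, N·L_n = L_{n+i_1} + ⋯ + L_{n+i_m}. That is, for any positive integer N and any integers i_1, …, i_m, conditions (1), (2), and (3) are pairwise equivalent. -/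
/-!
Put `A = N - ∑ φ^{i_k}` and `B = N - ∑ φ̄^{i_k}`. Up to the factor `√5`, condition (1) says
`A φ^n - B φ̄^n = 0` for all `n`, and condition (3) says `A φ^n + B φ̄^n = 0` for all `n`. Since
`φ ≠ φ̄`, each of them amounts to `A = B = 0`. Condition (2) is `A = 0`, which is equivalent to
`B = 0` by Galois conjugation: a root `x` of `x² = x + 1` is irrational and satisfies
`x^n = F_n x + F_{n-1}`, so `N = ∑ x^{i_k}` holds if and only if `∑ F_{i_k} = 0` and
`∑ F_{i_k - 1} = N`, whichever root `x` is.
-/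

lemma zpow_eq_intFib_mul_add_intFib {K : Type*} [Field K] {x : K} (hx : x ^ 2 = x + 1) (n : ℤ) :
    x ^ n = Int.fib n * x + Int.fib (n - 1) := by
  have hx₀ : x ≠ 0 := by
    rintro rfl
    simp at hx
  have inv_eq : x⁻¹ = x - 1 := inv_eq_of_mul_eq_one_right (by linear_combination hx)
  have fib_succ (k : ℤ) : (Int.fib (k + 1) : K) = Int.fib (k - 1) + Int.fib k := by
    rw [show k + 1 = k - 1 + 2 by ring, Int.fib_add_two, sub_add_cancel, Int.cast_add]
  induction n using Int.induction_on with
  | zero => simp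
  | succ n ih =>
    rw [zpow_add_one₀ hx₀, ih, fib_succ, add_sub_cancel_right]
    linear_combination (Int.fib n : K) * hx
  | pred n ih =>
    have fib_eq := fib_succ (-n - 1)
    rw [sub_add_cancel] at fib_eq
    rw [zpow_sub_one₀ hx₀, ih, inv_eq]
    linear_combination (Int.fib (-n) : K) * hx + fib_eq

lemma irrational_of_sq_eq_add_one {x : ℝ} (hx : x ^ 2 = x + 1) : Irrational x := by
  have factored : (x - Real.goldenRatio) * (x - Real.goldenConj) = 0 := by
    linear_combination hx - x * Real.goldenRatio_add_goldenConj + Real.goldenRatio_mul_goldenConj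
  rcases mul_eq_zero.mp factored with h | h
  · exact sub_eq_zero.mp h ▸ Real.goldenRatio_irrational
  · exact sub_eq_zero.mp h ▸ Real.goldenConj_irrational

lemma ratCast_eq_mul_add_iff {x : ℝ} (hx : Irrational x) (q a b : ℚ) :
    (q : ℝ) = a * x + b ↔ a = 0 ∧ q = b := by
  refine ⟨fun h ↦ ?_, by rintro ⟨rfl, rfl⟩; simp⟩
  have ha : a = 0 := by
    by_contra ha
    refine (hx.ratCast_mul ha).ne_rat (q - b) ?_
    push_cast
    linarith
  subst ha
  exact ⟨rfl, by simpa using h⟩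

lemma forall_mul_zpow_add_mul_zpow_eq_zero_iff {K : Type*} [Field K] {x y : K} (hxy : x ≠ y)
    (a b : K) :
    (∀ n : ℤ, a * x ^ n + b * y ^ n = 0) ↔ a = 0 ∧ b = 0 := by
  refine ⟨fun h ↦ ?_, by rintro ⟨rfl, rfl⟩; simp⟩
  have h₀ : a + b = 0 := by simpa using h 0
  have h₁ : a * x + b * y = 0 := by simpa using h 1
  have ha : a = 0 :=
    (mul_eq_zero.mp (by linear_combination h₁ - y * h₀ : a * (x - y) = 0)).resolve_right
      (sub_ne_zero.mpr hxy)
  exact ⟨ha, by simpa [ha] using h₀⟩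

section LinearCombination

variable {ι : Type*} (s : Finset ι) (i : ι → ℤ)

lemma ratCast_eq_sum_zpow_iff {x : ℝ} (hx : x ^ 2 = x + 1) (q : ℚ) (c : ι → ℚ) :
    (q : ℝ) = ∑ k ∈ s, c k * x ^ i k ↔
      ∑ k ∈ s, c k * Int.fib (i k) = 0 ∧ q = ∑ k ∈ s, c k * Int.fib (i k - 1) := by
  rw [← ratCast_eq_mul_add_iff (irrational_of_sq_eq_add_one hx)]
  push_cast
  simp only [zpow_eq_intFib_mul_add_intFib hx, Finset.sum_mul, ← Finset.sum_add_distrib, mul_add,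
    mul_assoc]

lemma ratCast_eq_sum_zpow_congr {x y : ℝ} (hx : x ^ 2 = x + 1) (hy : y ^ 2 = y + 1)
    (q : ℚ) (c : ι → ℚ) :
    (q : ℝ) = ∑ k ∈ s, c k * x ^ i k ↔ (q : ℝ) = ∑ k ∈ s, c k * y ^ i k :=
  (ratCast_eq_sum_zpow_iff s i hx q c).trans (ratCast_eq_sum_zpow_iff s i hy q c).symm

lemma forall_mul_eq_sum_shift_iff {K : Type*} [Field K] {x y u v : K}
    (hx : x ≠ 0) (hy : y ≠ 0) (hxy : x ≠ y) (hu : u ≠ 0) (hv : v ≠ 0)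
    {f : ℤ → K} (hf : ∀ n, f n = u * x ^ n + v * y ^ n) (q : K) (c : ι → K) :
    (∀ n, q * f n = ∑ k ∈ s, c k * f (n + i k)) ↔
      q = ∑ k ∈ s, c k * x ^ i k ∧ q = ∑ k ∈ s, c k * y ^ i k := by
  set X := ∑ k ∈ s, c k * x ^ i k with hX
  set Y := ∑ k ∈ s, c k * y ^ i k with hY
  have sum_shift (n : ℤ) : ∑ k ∈ s, c k * f (n + i k) = u * X * x ^ n + v * Y * y ^ n := by
    rw [hX, hY]
    simp only [hf, zpow_add₀ hx, zpow_add₀ hy, Finset.mul_sum, Finset.sum_mul,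
      ← Finset.sum_add_distrib]
    exact Finset.sum_congr rfl fun k _ ↦ by ring
  have difference (n : ℤ) : q * f n = ∑ k ∈ s, c k * f (n + i k) ↔
      u * (q - X) * x ^ n + v * (q - Y) * y ^ n = 0 := by
    rw [sum_shift, hf, ← sub_eq_zero]
    ring_nf
  simp only [difference, forall_mul_zpow_add_mul_zpow_eq_zero_iff hxy, mul_eq_zero, hu, hv,
    false_or, sub_eq_zero]

end LinearCombination

lemma goldenPhi_sq : goldenPhi ^ 2 = goldenPhi + 1 := Real.goldenRatio_sq

lemma goldenPhiBar_sq : goldenPhiBar ^ 2 = goldenPhiBar + 1 := Real.goldenConj_sq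

lemma goldenPhi_ne_zero : goldenPhi ≠ 0 := Real.goldenRatio_ne_zero

lemma goldenPhiBar_ne_zero : goldenPhiBar ≠ 0 := Real.goldenConj_ne_zero

lemma goldenPhi_ne_goldenPhiBar : goldenPhi ≠ goldenPhiBar :=
  (Real.goldenConj_neg.trans Real.goldenRatio_pos).ne'

theorem stmt_15_general {ι : Type*} (s : Finset ι) (i : ι → ℤ) (q : ℚ) (c : ι → ℚ) :
    [∀ n : ℤ, (q : ℝ) * FibR n = ∑ k ∈ s, c k * FibR (n + i k),
      (q : ℝ) = ∑ k ∈ s, c k * goldenPhi ^ i k,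
      ∀ n : ℤ, (q : ℝ) * LucasR n = ∑ k ∈ s, c k * LucasR (n + i k)].TFAE := by
  have conj := ratCast_eq_sum_zpow_congr s i goldenPhi_sq goldenPhiBar_sq q c
  have sqrt_five_inv_ne_zero : (√5)⁻¹ ≠ 0 := by positivity
  have fib_iff := forall_mul_eq_sum_shift_iff s i goldenPhi_ne_zero goldenPhiBar_ne_zero
    goldenPhi_ne_goldenPhiBar sqrt_five_inv_ne_zero (neg_ne_zero.mpr sqrt_five_inv_ne_zero)
    (f := FibR) (fun n ↦ by rw [FibR]; ring) q (fun k ↦ (c k : ℝ))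
  have lucas_iff := forall_mul_eq_sum_shift_iff s i goldenPhi_ne_zero goldenPhiBar_ne_zero
    goldenPhi_ne_goldenPhiBar one_ne_zero one_ne_zero
    (f := LucasR) (fun n ↦ by rw [LucasR]; ring) q (fun k ↦ (c k : ℝ))
  rw [← conj, and_self] at fib_iff lucas_iff
  tfae_have 1 ↔ 2 := fib_iff
  tfae_have 3 ↔ 2 := lucas_iff
  tfae_finish

/-- Proposition 1: for a positive integer `N` and integers `i_1, …, i_m`, the
conditions (1) `N·F_n = F_{n+i_1} + ⋯ + F_{n+i_m}` for all `n`,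
(2) `N = φ^{i_1} + ⋯ + φ^{i_m}`, and
(3) `N·L_n = L_{n+i_1} + ⋯ + L_{n+i_m}` for all `n`, are pairwise equivalent. -/
theorem stmt_15 (N : ℕ) (hN : 0 < N) (m : ℕ) (i : Fin m → ℤ) :
    ((∀ n : ℤ, (N : ℝ) * FibR n = ∑ k, FibR (n + i k)) ↔
      ((N : ℝ) = ∑ k, goldenPhi ^ (i k))) ∧
    (((N : ℝ) = ∑ k, goldenPhi ^ (i k)) ↔
      (∀ n : ℤ, (N : ℝ) * LucasR n = ∑ k, LucasR (n + i k))) ∧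
    ((∀ n : ℤ, (N : ℝ) * FibR n = ∑ k, FibR (n + i k)) ↔
      (∀ n : ℤ, (N : ℝ) * LucasR n = ∑ k, LucasR (n + i k))) := by
  have tfae := stmt_15_general Finset.univ i N 1
  simp only [Rat.cast_natCast, Pi.one_apply, Rat.cast_one, one_mul] at tfae
  exact ⟨tfae.out 0 1, tfae.out 1 2, tfae.out 0 2⟩
end
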